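/- arXiv:2501.16339 — 3 statements merged into one kernel-verified Lean document; each statement's English description precedes it below -/
import Mathlib

section
/- (Proposition 4.5) For every n with 1 ≤ n ≤ l−1, the image of B_n(W) under the map w ↦ θ_w is exactly {θ ⊆ Δ : {α_{n+1},…,α_{l-1}} ⊆ θ ⊆ Δ \ {α_n}} (where for n = l−1 the set {α_{n+1},…,α_{l-1}} is empty). -/
/-!
For `w = p_σ ∘ w̃_n` put `τ i = σ (n - 1 - i)` (0-indexed), so that `w e_i = -e_{τ i}` for `i < n` and
`w e_i = e_i` for `n ≤ i`. Then `w` fixes `α_i` for `n ≤ i`, makes `α_{n-1}` negative, and sends `α_i`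
to `e_{τ (i+1)} - e_{τ i}` for `i < n - 1`, which is a positive root exactly when `τ` has a descent at
`i` (`theta_iff`). This gives one inclusion.

Conversely, given `S`, let `J` be the set of `i < n - 1` with `α_i ∈ S`. Cut `{0, …, n-1}` into the
maximal intervals along which consecutive elements are linked by `J`, and let `τ` reverse each interval,
`τ i = blockLo i + blockHi i - i`. Then `τ` descends exactly at `J`, each time by exactly one, so `w α_i`
is simple for `i ∈ J` and negative for the other `i < n - 1`; hence `w` lies in the Bessel support and
`θ_w = S`.

That a vector is not a positive root is seen from its height `∑ (l - 1 - i) v_i`, which is positive on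
positive roots (`rootHt_pos`). The combinatorial half is `exists_descents`.
-/

open Matrix BigOperators

noncomputable section

/-- The standard basis vector `e_k` of `ℝ^{l-1}` (0-indexed; `0` if out of range). -/
def evec (l k : ℕ) : Fin (l-1) → ℝ := fun j => if (j : ℕ) = k then 1 else 0

/-- The simple roots of type `B_{l-1}` (0-indexed): `α_i = e_i − e_{i+1}` for `i < l-2`, and
`α_{l-2} = e_{l-2}` (in the paper's 1-indexed notation, `α_i = e_i − e_{i+1}` for
`1 ≤ i ≤ l-2` and `α_{l-1} = e_{l-1}`). -/
def alphaR (l i : ℕ) : Fin (l-1) → ℝ :=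
  if i = l - 2 then evec l i else evec l i - evec l (i+1)

/-- The positive roots `Φ⁺ = {e_i − e_j : i < j} ∪ {e_i + e_j : i ≠ j} ∪ {e_i}`. -/
def PhiPlus (l : ℕ) : Set (Fin (l-1) → ℝ) :=
  {v | ∃ i j : ℕ, i < j ∧ j < l - 1 ∧ v = evec l i - evec l j} ∪
  {v | ∃ i j : ℕ, i < j ∧ j < l - 1 ∧ v = evec l i + evec l j} ∪
  {v | ∃ i : ℕ, i < l - 1 ∧ v = evec l i}

/-- The set of simple roots `Δ`. -/
def DeltaR (l : ℕ) : Set (Fin (l-1) → ℝ) := {v | ∃ i : ℕ, i < l - 1 ∧ v = alphaR l i}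

/-- A signed permutation: `w(e_i) = ε_i·e_{σ(i)}` with `ε_i ∈ {±1}`.  (The linear
automorphisms of `ℝ^{l-1}` are represented by matrices acting via `mulVec`.) -/
def IsSignedPerm (l : ℕ) (w : Matrix (Fin (l-1)) (Fin (l-1)) ℝ) : Prop :=
  ∃ (σ : Equiv.Perm (Fin (l-1))) (ε : Fin (l-1) → ℝ),
    (∀ i, ε i = 1 ∨ ε i = -1) ∧
    ∀ i : Fin (l-1), w.mulVec (evec l (i : ℕ)) = ε i • evec l ((σ i : Fin (l-1)) : ℕ)

/-- The Bessel support `B(W) = {w ∈ W : ∀ α ∈ Δ, w(α) ∈ Δ or w(α) ∈ Φ⁻}`. -/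
def BesselSupp (l : ℕ) : Set (Matrix (Fin (l-1)) (Fin (l-1)) ℝ) :=
  {w | IsSignedPerm l w ∧
    ∀ a ∈ DeltaR l, w.mulVec a ∈ DeltaR l ∨ (-(w.mulVec a)) ∈ PhiPlus l}

/-- `θ_w = {α ∈ Δ : w(α) ∈ Φ⁺}`. -/
def thetaSet (l : ℕ) (w : Matrix (Fin (l-1)) (Fin (l-1)) ℝ) : Set (Fin (l-1) → ℝ) :=
  {a | a ∈ DeltaR l ∧ w.mulVec a ∈ PhiPlus l}

/-- The matrix of `w̃_n`: `w̃_n(e_i) = −e_{n+1−i}` for `1 ≤ i ≤ n` (1-indexed) and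
`w̃_n(e_i) = e_i` otherwise. -/
def wtmatR (l n : ℕ) : Matrix (Fin (l-1)) (Fin (l-1)) ℝ :=
  Matrix.of fun i j =>
    if (i : ℕ) < n then (if (j : ℕ) = n - 1 - (i : ℕ) then -1 else 0)
    else if i = j then 1 else 0

/-- The matrix of `p_σ` for `σ ∈ S_n`: permutes `e_1,…,e_n` by `σ` and fixes the rest. -/
def pmatR (l n : ℕ) (σ : Equiv.Perm (Fin n)) : Matrix (Fin (l-1)) (Fin (l-1)) ℝ :=
  Matrix.of fun r j =>
    if h : (j : ℕ) < n then (if (r : ℕ) = ((σ ⟨(j : ℕ), h⟩ : Fin n) : ℕ) then 1 else 0)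
    else if r = j then 1 else 0

/-- `B_n(W) = {w ∈ B(W) : w = p_σ ∘ w̃_n for some σ ∈ S_n}`, with `B_0(W) = {identity}`. -/
def BnSupp (l n : ℕ) : Set (Matrix (Fin (l-1)) (Fin (l-1)) ℝ) :=
  {w | w ∈ BesselSupp l ∧
    (if n = 0 then w = 1 else ∃ σ : Equiv.Perm (Fin n), w = pmatR l n σ * wtmatR l n)}

/-! ### Roots and heights -/

/-- The height of a vector: the linear functional taking the value `1` on every simple root. -/
def rootHt (l : ℕ) (v : Fin (l-1) → ℝ) : ℝ :=
  ∑ i : Fin (l-1), (((l - 1 : ℕ) : ℝ) - (i : ℕ)) * v i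

lemma rootHt_sub (l : ℕ) (u v : Fin (l-1) → ℝ) : rootHt l (u - v) = rootHt l u - rootHt l v := by
  simp [rootHt, mul_sub, Finset.sum_sub_distrib]

lemma rootHt_add (l : ℕ) (u v : Fin (l-1) → ℝ) : rootHt l (u + v) = rootHt l u + rootHt l v := by
  simp [rootHt, mul_add, Finset.sum_add_distrib]

lemma evec_top (l : ℕ) : evec l (l - 1) = 0 := by
  funext j
  have := j.2
  simp only [evec, Pi.zero_apply, ite_eq_right_iff]
  omega

/-- The value `k = l - 1` is allowed: both sides are then zero. -/
lemma rootHt_evec (l k : ℕ) (hk : k ≤ l - 1) :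
    rootHt l (evec l k) = ((l - 1 : ℕ) : ℝ) - k := by
  rcases hk.eq_or_lt with rfl | hk
  · simp [evec_top, rootHt]
  · rw [rootHt, Finset.sum_eq_single (⟨k, hk⟩ : Fin (l-1))]
    · simp [evec]
    · intro b _ hb
      have : (b : ℕ) ≠ k := fun h => hb (Fin.ext h)
      simp [evec, this]
    · simp

/-- As `evec l (l - 1)` is the zero vector, the last simple root needs no separate treatment. -/
lemma alphaR_eq (l i : ℕ) (hi : i < l - 1) : alphaR l i = evec l i - evec l (i+1) := by
  unfold alphaR
  split_ifs with h
  · have : i + 1 = l - 1 := by omega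
    rw [this, evec_top, sub_zero]
  · rfl

lemma rootHt_pos (l : ℕ) (v : Fin (l-1) → ℝ) (hv : v ∈ PhiPlus l) : 0 < rootHt l v := by
  rcases hv with (⟨i, j, hij, hj, rfl⟩ | ⟨i, j, hij, hj, rfl⟩) | ⟨i, hi, rfl⟩
  · rw [rootHt_sub, rootHt_evec l i (by omega), rootHt_evec l j (by omega)]
    have : (i : ℝ) < j := by exact_mod_cast hij
    linarith
  · rw [rootHt_add, rootHt_evec l i (by omega), rootHt_evec l j (by omega)]
    have h1 : (i : ℝ) < j := by exact_mod_cast hij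
    have h2 : (j : ℝ) < (l - 1 : ℕ) := by exact_mod_cast hj
    linarith
  · rw [rootHt_evec l i (by omega)]
    have h2 : (i : ℝ) < (l - 1 : ℕ) := by exact_mod_cast hi
    linarith

lemma evec_sub_mem_iff (l a b : ℕ) (ha : a < l - 1) (hb : b < l - 1) :
    evec l a - evec l b ∈ PhiPlus l ↔ a < b := by
  constructor
  · intro h
    have := rootHt_pos l _ h
    rw [rootHt_sub, rootHt_evec l a (by omega), rootHt_evec l b (by omega)] at this
    have h2 : (a : ℝ) < b := by linarith
    exact_mod_cast h2
  · intro h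
    exact Or.inl (Or.inl ⟨a, b, h, hb, rfl⟩)

lemma alphaR_mem_PhiPlus (l i : ℕ) (hi : i < l - 1) : alphaR l i ∈ PhiPlus l := by
  rw [alphaR_eq l i hi]
  rcases Nat.lt_or_ge (i + 1) (l - 1) with h | h
  · exact Or.inl (Or.inl ⟨i, i + 1, by omega, h, rfl⟩)
  · have : i + 1 = l - 1 := by omega
    rw [this, evec_top, sub_zero]
    exact Or.inr ⟨i, hi, rfl⟩

lemma neg_notMem_PhiPlus (l : ℕ) (v : Fin (l-1) → ℝ) (hv : -v ∈ PhiPlus l) : v ∉ PhiPlus l := by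
  intro h
  have h1 := rootHt_pos l _ hv
  have h2 := rootHt_pos l _ h
  have h3 := rootHt_add l v (-v)
  have h4 : rootHt l (v + -v) = 0 := by simp [rootHt]
  linarith

/-! ### The action of `p_σ ∘ w̃_n` -/

lemma mulVec_evec (l : ℕ) (w : Matrix (Fin (l-1)) (Fin (l-1)) ℝ) (k : ℕ) (hk : k < l - 1) :
    w.mulVec (evec l k) = fun r => w r ⟨k, hk⟩ := by
  have : evec l k = Pi.single (⟨k, hk⟩ : Fin (l-1)) (1 : ℝ) := by
    funext j
    simp [evec, Pi.single_apply, Fin.ext_iff]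
  rw [this, Matrix.mulVec_single_one]
  rfl

/-- `w` acts as `e_i ↦ -e_{t i}` for `i < n` and `e_i ↦ e_i` for `n ≤ i`. -/
def ActsBy (l n : ℕ) (t : ℕ → ℕ) (w : Matrix (Fin (l-1)) (Fin (l-1)) ℝ) : Prop :=
  ∀ i < l - 1, w.mulVec (evec l i) = if i < n then -evec l (t i) else evec l i

lemma wtmatR_evec (l n : ℕ) : ActsBy l n (fun i => n - 1 - i) (wtmatR l n) := by
  intro i hi
  rw [mulVec_evec l _ i hi]
  funext r
  by_cases h : i < n
  · simp only [wtmatR, Matrix.of_apply, h, if_true, Pi.neg_apply, evec]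
    by_cases hr : (r : ℕ) < n
    · have : (i = n - 1 - (r : ℕ)) ↔ ((r : ℕ) = n - 1 - i) := by omega
      simp only [hr, if_true, this]
      split_ifs <;> simp
    · have h1 : r ≠ ⟨i, hi⟩ := by
        rintro rfl
        exact hr h
      have h2 : (r : ℕ) ≠ n - 1 - i := by omega
      simp [hr, h1, h2]
  · simp only [wtmatR, Matrix.of_apply, h, if_false, evec]
    by_cases hr : (r : ℕ) < n
    · have h1 : i ≠ n - 1 - (r : ℕ) := by omega
      have h2 : (r : ℕ) ≠ i := by omega
      simp [hr, h1, h2]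
    · simp [hr, Fin.ext_iff]

lemma pmatR_evec (l n : ℕ) (σ : Equiv.Perm (Fin n)) (i : ℕ) (hi : i < l - 1) :
    (pmatR l n σ).mulVec (evec l i) =
      if h : i < n then evec l ((σ ⟨i, h⟩ : Fin n) : ℕ) else evec l i := by
  rw [mulVec_evec l _ i hi]
  funext r
  by_cases h : i < n
  · simp [pmatR, h, evec]
  · simp [pmatR, h, evec, Fin.ext_iff]

lemma prod_actsBy (l n : ℕ) (hn : n ≤ l - 1) (σ : Equiv.Perm (Fin n)) (t : ℕ → ℕ)
    (ht : ∀ i (h : i < n), t i = (σ ⟨n - 1 - i, by omega⟩ : Fin n)) :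
    ActsBy l n t (pmatR l n σ * wtmatR l n) := by
  intro i hi
  rw [← Matrix.mulVec_mulVec, wtmatR_evec l n i hi]
  by_cases h : i < n
  · have h' : n - 1 - i < n := by omega
    simp only [h, if_true]
    rw [Matrix.mulVec_neg, pmatR_evec l n σ _ (by omega), dif_pos h', ht i h]
  · simp only [h, if_false]
    rw [pmatR_evec l n σ _ hi, dif_neg h]

lemma ActsBy.low {l n : ℕ} {t : ℕ → ℕ} {w} (hw : ActsBy l n t w) (hn : n ≤ l - 1)
    (i : ℕ) (hi : i + 1 < n) :
    w.mulVec (alphaR l i) = evec l (t (i+1)) - evec l (t i) := by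
  rw [alphaR_eq l i (by omega), Matrix.mulVec_sub, hw i (by omega), hw (i+1) (by omega),
    if_pos (by omega), if_pos hi]
  abel

lemma ActsBy.high {l n : ℕ} {t : ℕ → ℕ} {w} (hw : ActsBy l n t w)
    (i : ℕ) (hi : n ≤ i) (hi' : i < l - 1) : w.mulVec (alphaR l i) = alphaR l i := by
  rw [alphaR_eq l i hi', Matrix.mulVec_sub, hw i hi', if_neg (by omega)]
  rcases Nat.lt_or_ge (i + 1) (l - 1) with h | h
  · rw [hw (i+1) h, if_neg (by omega)]
  · have : i + 1 = l - 1 := by omega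
    rw [this, evec_top, Matrix.mulVec_zero]

lemma ActsBy.mid {l n : ℕ} {t : ℕ → ℕ} {w} (hw : ActsBy l n t w) (hn1 : 1 ≤ n) (hn : n ≤ l - 1)
    (ht : ∀ i < n, t i < n) : -(w.mulVec (alphaR l (n-1))) ∈ PhiPlus l := by
  have hlt := ht (n-1) (by omega)
  rw [alphaR_eq l _ (by omega), Matrix.mulVec_sub, hw (n-1) (by omega), if_pos (by omega),
    Nat.sub_add_cancel hn1]
  rcases hn.eq_or_lt with h | h
  · have h0 : evec l n = 0 := by rw [h, evec_top]
    rw [h0, Matrix.mulVec_zero, sub_zero, neg_neg]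
    exact Or.inr ⟨_, by omega, rfl⟩
  · rw [hw n h, if_neg (by omega)]
    refine Or.inl (Or.inr ⟨t (n-1), n, hlt, h, ?_⟩)
    abel

/-- Membership of `α_i` in `θ_w`: always for `n ≤ i`, and at the descents of `t` for `i + 1 < n`. -/
lemma theta_iff {l n : ℕ} {t : ℕ → ℕ} {w} (hw : ActsBy l n t w) (hn1 : 1 ≤ n) (hn : n ≤ l - 1)
    (ht : ∀ i < n, t i < n) (i : ℕ) (hi : i < l - 1) :
    w.mulVec (alphaR l i) ∈ PhiPlus l ↔ (n ≤ i ∨ (i + 1 < n ∧ t (i+1) < t i)) := by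
  rcases lt_trichotomy (i + 1) n with h | h | h
  · have h1 := ht i (by omega)
    have h2 := ht (i+1) h
    rw [hw.low hn i h, evec_sub_mem_iff l _ _ (by omega) (by omega)]
    omega
  · obtain rfl : i = n - 1 := by omega
    have := neg_notMem_PhiPlus l _ (hw.mid hn1 hn ht)
    simp only [this, false_iff]
    omega
  · rw [hw.high i (by omega) hi]
    simp only [alphaR_mem_PhiPlus l i hi, true_iff]
    omega

lemma ActsBy.isSignedPerm {l n : ℕ} {t : ℕ → ℕ} {w} (hw : ActsBy l n t w) (hn : n ≤ l - 1)
    (ht : ∀ i < n, t i < n) (hinj : ∀ i < n, ∀ j < n, t i = t j → i = j) : IsSignedPerm l w := by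
  let f : Fin (l-1) → Fin (l-1) := fun i =>
    if h : (i : ℕ) < n then ⟨t i, (ht i h).trans_le hn⟩ else i
  have hf : Function.Injective f := by
    intro i j hij
    by_cases h1 : (i : ℕ) < n <;> by_cases h2 : (j : ℕ) < n <;>
      simp only [f, h1, h2, dite_true, dite_false, Fin.ext_iff] at hij
    · exact Fin.ext (hinj _ h1 _ h2 hij)
    · have := ht _ h1
      omega
    · have := ht _ h2
      omega
    · exact Fin.ext hij
  refine ⟨Equiv.ofBijective f (Finite.injective_iff_bijective.mp hf),
    fun i => if (i : ℕ) < n then -1 else 1, fun i => ?_, fun i => ?_⟩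
  · by_cases h : (i : ℕ) < n <;> simp [h]
  · rw [hw i i.2]
    by_cases h : (i : ℕ) < n <;> simp [h, f]

/-- `w` lies in the Bessel support as soon as every descent of `t` has drop exactly one. -/
lemma ActsBy.mem_besselSupp {l n : ℕ} {t : ℕ → ℕ} {w} (hw : ActsBy l n t w) (hn1 : 1 ≤ n)
    (hn : n ≤ l - 1) (ht : ∀ i < n, t i < n) (hinj : ∀ i < n, ∀ j < n, t i = t j → i = j)
    (hd : ∀ i, i + 1 < n → t i < t (i+1) ∨ t i = t (i+1) + 1) : w ∈ BesselSupp l := by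
  refine ⟨hw.isSignedPerm hn ht hinj, ?_⟩
  rintro a ⟨i, hi, rfl⟩
  rcases lt_trichotomy (i + 1) n with h | h | h
  · have h1 := ht i (by omega)
    have h2 := ht (i+1) h
    rw [hw.low hn i h]
    rcases hd i h with h3 | h3
    · right
      rw [neg_sub, evec_sub_mem_iff l _ _ (by omega) (by omega)]
      exact h3
    · left
      exact ⟨t (i+1), by omega, by rw [alphaR_eq l _ (by omega), h3]⟩
  · obtain rfl : i = n - 1 := by omega
    exact Or.inr (hw.mid hn1 hn ht)
  · rw [hw.high i (by omega) hi]
    exact Or.inl ⟨i, hi, rfl⟩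

/-! ### Reversing the blocks of a set of descents -/

open Classical in
/-- The left end of the block of `i`: the least `a` such that `a, a + 1, …, i - 1` all lie in `J`. -/
def blockLo (J : Set ℕ) : ℕ → ℕ
  | 0 => 0
  | i + 1 => if i ∈ J then blockLo J i else i + 1

/-- The right end of the block of `i`: the least element outside `J` that is at least `i`.
It is meaningful only when such an element exists. -/
def blockHi (J : Set ℕ) (i : ℕ) : ℕ := sInf {b | i ≤ b ∧ b ∉ J}

lemma blockLo_le (J : Set ℕ) (i : ℕ) : blockLo J i ≤ i := by
  induction i with
  | zero => simp [blockLo]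
  | succ i ih =>
    unfold blockLo
    split_ifs <;> omega

lemma blockHi_of_notMem (J : Set ℕ) (i : ℕ) (h : i ∉ J) : blockHi J i = i :=
  le_antisymm (Nat.sInf_le ⟨le_rfl, h⟩) (le_csInf ⟨i, le_rfl, h⟩ fun _ hb => hb.1)

lemma blockHi_of_mem (J : Set ℕ) (i : ℕ) (h : i ∈ J) : blockHi J i = blockHi J (i+1) := by
  unfold blockHi
  congr 1
  ext b
  constructor
  · rintro ⟨h1, h2⟩
    have : i ≠ b := fun e => h2 (e ▸ h)
    exact ⟨by omega, h2⟩
  · rintro ⟨h1, h2⟩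
    exact ⟨by omega, h2⟩

/-- Two blocks are either equal or disjoint and in the expected order. -/
lemma block_cases (J : Set ℕ) (i j : ℕ) (hij : i ≤ j) :
    blockHi J i < blockLo J j ∨ (blockLo J i = blockLo J j ∧ blockHi J i = blockHi J j) := by
  induction j, hij using Nat.le_induction with
  | base => simp
  | succ j hj ih =>
    by_cases h : j ∈ J
    · simpa [blockLo, h, ← blockHi_of_mem J j h] using ih
    · left
      have h1 := blockHi_of_notMem J j h
      have h2 := blockLo_le J j
      simp only [blockLo, h, if_false]
      omega

/-- A set `J ⊆ {0, …, n-2}` is the descent set of a permutation of `{0, …, n-1}` whose descents all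
have drop one. -/
lemma exists_descents (n : ℕ) (J : Set ℕ) (hJ : ∀ i ∈ J, i + 1 < n) :
    ∃ t : ℕ → ℕ, (∀ i < n, t i < n) ∧ (∀ i < n, ∀ j < n, t i = t j → i = j) ∧
      (∀ i ∈ J, t i = t (i+1) + 1) ∧ (∀ i ∉ J, i + 1 < n → t i < t (i+1)) := by
  have hhi : ∀ i < n, i ≤ blockHi J i ∧ blockHi J i < n := by
    intro i hi
    have hm : n - 1 ∈ {b | i ≤ b ∧ b ∉ J} := ⟨by omega, fun h => by have := hJ _ h; omega⟩
    have h1 : i ≤ blockHi J i := le_csInf ⟨_, hm⟩ fun _ hb => hb.1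
    have h2 : blockHi J i ≤ n - 1 := Nat.sInf_le hm
    omega
  have hinj : ∀ i < n, ∀ j < n, i ≤ j →
      blockLo J i + blockHi J i - i = blockLo J j + blockHi J j - j → i = j := by
    intro i hi j hj hij he
    have := hhi i hi
    have := hhi j hj
    have := blockLo_le J i
    have := blockLo_le J j
    rcases block_cases J i j hij with h | h <;> omega
  refine ⟨fun i => blockLo J i + blockHi J i - i, fun i hi => ?_, fun i hi j hj he => ?_,
    fun i hi => ?_, fun i hi hin => ?_⟩
  · have := hhi i hi
    have := blockLo_le J i
    dsimp only
    omega
  · rcases le_total i j with h | h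
    · exact hinj i hi j hj h he
    · exact (hinj j hj i hi h he.symm).symm
  · have h1 := hhi (i+1) (hJ i hi)
    have h2 := blockHi_of_mem J i hi
    have h3 : blockLo J (i+1) = blockLo J i := by simp [blockLo, hi]
    dsimp only
    omega
  · have h1 := hhi (i+1) hin
    have h2 := blockHi_of_notMem J i hi
    have h3 : blockLo J (i+1) = i + 1 := by simp [blockLo, hi]
    have h4 := blockLo_le J i
    dsimp only
    omega

/-- Every permutation `t` of `{0, …, n-1}` arises from a product `p_σ ∘ w̃_n`. -/
lemma exists_perm (l n : ℕ) (hn : n ≤ l - 1) (t : ℕ → ℕ)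
    (ht : ∀ i < n, t i < n) (hinj : ∀ i < n, ∀ j < n, t i = t j → i = j) :
    ∃ σ : Equiv.Perm (Fin n), ActsBy l n t (pmatR l n σ * wtmatR l n) := by
  let f : Fin n → Fin n := fun i => ⟨t (n - 1 - i), ht _ (by omega)⟩
  have hf : Function.Injective f := by
    intro i j hij
    have := hinj _ (by omega) _ (by omega) (Fin.ext_iff.mp hij)
    exact Fin.ext (by omega)
  refine ⟨Equiv.ofBijective f (Finite.injective_iff_bijective.mp hf), prod_actsBy l n hn _ t ?_⟩
  intro i h
  have : n - 1 - (n - 1 - i) = i := by omega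
  simp [f, this]

/-- Proposition 4.5: for `1 ≤ n ≤ l−1`, the image of `B_n(W)` under
`w ↦ θ_w` is exactly `{θ ⊆ Δ : {α_{n+1},…,α_{l-1}} ⊆ θ ⊆ Δ \ {α_n}}` (1-indexed `α`'s;
`alphaR` below is 0-indexed, so `α_n = alphaR l (n-1)`). -/
theorem statement13 (l : ℕ) (hl : 2 ≤ l) (n : ℕ) (hn1 : 1 ≤ n) (hn2 : n ≤ l - 1) :
    ∀ S : Set (Fin (l-1) → ℝ),
      (∃ w ∈ BnSupp l n, thetaSet l w = S) ↔
      ({v | ∃ i : ℕ, n ≤ i ∧ i < l - 1 ∧ v = alphaR l i} ⊆ S ∧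
        S ⊆ DeltaR l \ {alphaR l (n - 1)}) := by
  intro S
  constructor
  · rintro ⟨w, ⟨-, hw⟩, rfl⟩
    rw [if_neg (by omega)] at hw
    obtain ⟨σ, rfl⟩ := hw
    let t : ℕ → ℕ := fun i => (σ ⟨n - 1 - i, by omega⟩ : Fin n)
    have hw : ActsBy l n t (pmatR l n σ * wtmatR l n) := prod_actsBy l n hn2 σ t fun _ _ => rfl
    have ht : ∀ i < n, t i < n := fun i _ => Fin.is_lt _
    constructor
    · rintro v ⟨i, hni, hi, rfl⟩
      exact ⟨⟨i, hi, rfl⟩, (theta_iff hw hn1 hn2 ht i hi).mpr (Or.inl hni)⟩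
    · rintro v ⟨hv, hv'⟩
      refine ⟨hv, ?_⟩
      rintro rfl
      exact neg_notMem_PhiPlus l _ (hw.mid hn1 hn2 ht) hv'
  · rintro ⟨hS1, hS2⟩
    obtain ⟨t, ht, hinj, hJ1, hJ2⟩ := exists_descents n {i | i + 1 < n ∧ alphaR l i ∈ S}
      fun i hi => hi.1
    obtain ⟨σ, hw⟩ := exists_perm l n hn2 t ht hinj
    refine ⟨_, ⟨hw.mem_besselSupp hn1 hn2 ht hinj fun i hi => ?_, ?_⟩, ?_⟩
    · by_cases h : alphaR l i ∈ S
      · exact Or.inr (hJ1 i ⟨hi, h⟩)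
      · exact Or.inl (hJ2 i (fun h' => h h'.2) hi)
    · rw [if_neg (by omega)]
      exact ⟨σ, rfl⟩
    · have key : ∀ i < l - 1, (pmatR l n σ * wtmatR l n).mulVec (alphaR l i) ∈ PhiPlus l ↔
          alphaR l i ∈ S := by
        intro i hi
        rw [theta_iff hw hn1 hn2 ht i hi]
        constructor
        · rintro (h | ⟨h1, h2⟩)
          · exact hS1 ⟨i, h, hi, rfl⟩
          · by_contra h
            have := hJ2 i (fun h' => h h'.2) h1
            omega
        · intro h
          have hne : i ≠ n - 1 := by
            rintro rfl
            exact (hS2 h).2 rfl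
          by_cases hni : n ≤ i
          · exact Or.inl hni
          · have := hJ1 i ⟨by omega, h⟩
            exact Or.inr ⟨by omega, by omega⟩
      ext v
      constructor
      · rintro ⟨⟨i, hi, rfl⟩, hv⟩
        exact (key i hi).mp hv
      · intro hv
        obtain ⟨i, hi, rfl⟩ := (hS2 hv).1
        exact ⟨⟨i, hi, rfl⟩, (key i hi).mpr hv⟩
end
end

section
/- (Corollary 4.6) The Bessel support B(W) is the disjoint union of the sets B_0(W), B_1(W), …, B_{l-1}(W); that is, every w ∈ B(W) lies in exactly one B_n(W) for some 0 ≤ n ≤ l−1. -/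
/-!
Write `w e_i = ε_i e_{σ i}` and test the Bessel condition on each simple root.

* `w (e_i - e_{i+1})` is never of the form `e_p + e_q`, since such a vector is neither simple nor
  negative; hence `ε_i = 1` forces `ε_{i+1} = 1`, and the signs read `-⋯-+⋯+`. The `n` of the
  statement is the number of minus signs (`exists_threshold`).
* On the last simple root `e_{l-2}`, a plus sign forces `w e_{l-2} = e_{l-2}`. Going down from there,
  two consecutive plus signs give `σ (i+1) = σ i + 1` or `σ i > σ (i+1)`; as all indices above `i`
  are already fixed by `σ`, the second case is impossible, so `σ i = i` (`fixed_above`).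

So `w` is the identity on `e_n, …, e_{l-2}`, and `w e_i = -e_{σ i}` for `i < n`, where `σ` permutes
`{0, …, n-1}`: this is `p_τ ∘ w̃_n` with `τ = σ ∘ rev`. Uniqueness holds because the sum of the
coordinates of `w e_j` is `-1` for `j < n` and `1` for `j ≥ n` (`colSum_of_mem_BnSupp`).

The sum of coordinates also separates the root types: it is nonnegative on `Φ⁺` and at most `1`
on `Δ`.
-/

open Matrix BigOperators

noncomputable section

lemma evec_apply (l k : ℕ) (j : Fin (l-1)) : evec l k j = if (j : ℕ) = k then 1 else 0 := rfl

lemma evec_eq_single (l : ℕ) (i : Fin (l-1)) : evec l (i : ℕ) = Pi.single i 1 := by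
  ext j
  simp [evec_apply, Pi.single_apply, Fin.ext_iff]

lemma sum_evec {l k : ℕ} (hk : k < l - 1) : ∑ j, evec l k j = 1 := by
  rw [show k = ((⟨k, hk⟩ : Fin (l-1)) : ℕ) from rfl, evec_eq_single]
  simp

lemma sum_nonneg_of_mem_PhiPlus {l : ℕ} {v : Fin (l-1) → ℝ} (hv : v ∈ PhiPlus l) :
    0 ≤ ∑ j, v j := by
  rcases hv with (⟨i, j, hij, hj, rfl⟩ | ⟨i, j, hij, hj, rfl⟩) | ⟨i, hi, rfl⟩
  · simp [Finset.sum_sub_distrib, sum_evec hj, sum_evec (hij.trans hj)]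
  · simp [Finset.sum_add_distrib, sum_evec hj, sum_evec (hij.trans hj)]
  · simp [sum_evec hi]

/-- The sum of coordinates is `0` on the differences `e_i - e_{i+1}` and `1` on the short root. -/
lemma mem_DeltaR_cases {l : ℕ} {v : Fin (l-1) → ℝ} (hv : v ∈ DeltaR l) :
    (v = evec l (l-2) ∧ ∑ j, v j = 1) ∨
      ∃ i, i + 1 < l - 1 ∧ v = evec l i - evec l (i+1) ∧ ∑ j, v j = 0 := by
  obtain ⟨i, hi, rfl⟩ := hv
  unfold alphaR
  split_ifs with h
  · subst h
    exact Or.inl ⟨rfl, sum_evec hi⟩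
  · have h' : i + 1 < l - 1 := by omega
    refine Or.inr ⟨i, h', rfl, ?_⟩
    simp [Finset.sum_sub_distrib, sum_evec hi, sum_evec h']

lemma evec_add_not_mem_DeltaR {l p q : ℕ} (hp : p < l - 1) (hq : q < l - 1) :
    evec l p + evec l q ∉ DeltaR l := by
  intro h
  have hs : ∑ j, (evec l p + evec l q) j = 2 := by
    simp only [Pi.add_apply, Finset.sum_add_distrib, sum_evec hp, sum_evec hq]
    norm_num
  rcases mem_DeltaR_cases h with ⟨-, h⟩ | ⟨_, -, -, h⟩ <;> rw [hs] at h <;> norm_num at h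

lemma neg_evec_add_not_mem_PhiPlus {l p q : ℕ} (hp : p < l - 1) (hq : q < l - 1) :
    -(evec l p + evec l q) ∉ PhiPlus l := by
  intro h
  have := sum_nonneg_of_mem_PhiPlus h
  simp only [Pi.neg_apply, Pi.add_apply, Finset.sum_neg_distrib, Finset.sum_add_distrib,
    sum_evec hp, sum_evec hq] at this
  norm_num at this

lemma neg_evec_not_mem_PhiPlus {l p : ℕ} (hp : p < l - 1) : -evec l p ∉ PhiPlus l := by
  intro h
  have := sum_nonneg_of_mem_PhiPlus h
  simp only [Pi.neg_apply, Finset.sum_neg_distrib, sum_evec hp] at this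
  norm_num at this

lemma eq_of_evec_mem_DeltaR {l p : ℕ} (hp : p < l - 1) (h : evec l p ∈ DeltaR l) :
    p = l - 2 := by
  rcases mem_DeltaR_cases h with ⟨h, -⟩ | ⟨_, -, -, h⟩
  · have := congrFun h ⟨p, hp⟩
    simpa [evec_apply] using this
  · rw [sum_evec hp] at h
    norm_num at h

/-- A root `e_p - e_q` determines `p` and `q`. -/
lemma evec_sub_inj {l p q i j : ℕ} (hp : p < l - 1) (hq : q < l - 1) (hpq : p ≠ q)
    (h : evec l p - evec l q = evec l i - evec l j) : p = i ∧ q = j := by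
  have h1 := congrFun h ⟨p, hp⟩
  have h2 := congrFun h ⟨q, hq⟩
  simp only [Pi.sub_apply, evec_apply, hpq, hpq.symm, if_true, if_false] at h1 h2
  constructor
  · by_contra hc
    rw [if_neg hc] at h1
    split_ifs at h1 <;> norm_num at h1
  · by_contra hc
    rw [if_neg hc] at h2
    split_ifs at h2 <;> norm_num at h2

lemma eq_succ_of_evec_sub_mem_DeltaR {l p q : ℕ} (hp : p < l - 1) (hq : q < l - 1) (hpq : p ≠ q)
    (h : evec l p - evec l q ∈ DeltaR l) : q = p + 1 := by
  rcases mem_DeltaR_cases h with ⟨-, h⟩ | ⟨i, -, h, -⟩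
  · simp [Finset.sum_sub_distrib, sum_evec hp, sum_evec hq] at h
  · obtain ⟨rfl, rfl⟩ := evec_sub_inj hp hq hpq h
    rfl

lemma lt_of_neg_evec_sub_mem_PhiPlus {l p q : ℕ} (hp : p < l - 1) (hq : q < l - 1) (hpq : p ≠ q)
    (h : -(evec l p - evec l q) ∈ PhiPlus l) : q < p := by
  have hs : ∑ k, (evec l q - evec l p) k = 0 := by
    simp [Finset.sum_sub_distrib, sum_evec hp, sum_evec hq]
  rw [neg_sub] at h
  rcases h with (⟨i, j, hij, hj, h⟩ | ⟨i, j, hij, hj, h⟩) | ⟨i, hi, h⟩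
  · obtain ⟨rfl, rfl⟩ := evec_sub_inj hq hp hpq.symm h
    exact hij
  · rw [h] at hs
    simp only [Pi.add_apply, Finset.sum_add_distrib, sum_evec hj, sum_evec (hij.trans hj)] at hs
    norm_num at hs
  · rw [h, sum_evec hi] at hs
    norm_num at hs

section Bessel

variable {l : ℕ} {w : Matrix (Fin (l-1)) (Fin (l-1)) ℝ} {σ : Equiv.Perm (Fin (l-1))}
  {ε : Fin (l-1) → ℝ}

lemma apply_of_signed
    (hw : ∀ i : Fin (l-1), w.mulVec (evec l (i : ℕ)) = ε i • evec l ((σ i : Fin (l-1)) : ℕ))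
    (r j : Fin (l-1)) : w r j = if (r : ℕ) = σ j then ε j else 0 := by
  have h := congrFun (hw j) r
  rw [evec_eq_single, Matrix.mulVec_single_one] at h
  simpa [evec_apply] using h

/-- The Bessel condition at `e_i - e_{i+1}` when `ε_i = 1`: the image is `e_{σ i} - e_{σ (i+1)}`,
which is either simple or negative. -/
lemma step_of_pos (hε : ∀ i, ε i = 1 ∨ ε i = -1)
    (hw : ∀ i : Fin (l-1), w.mulVec (evec l (i : ℕ)) = ε i • evec l ((σ i : Fin (l-1)) : ℕ))
    (hB : ∀ a ∈ DeltaR l, w.mulVec a ∈ DeltaR l ∨ (-(w.mulVec a)) ∈ PhiPlus l)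
    {i j : Fin (l-1)} (hij : (j : ℕ) = i + 1) (hi : ε i = 1) :
    ε j = 1 ∧ ((σ j : ℕ) = σ i + 1 ∨ σ j < σ i) := by
  have hα : alphaR l i = evec l i - evec l j := by
    have := j.isLt
    rw [alphaR, if_neg (by omega), hij]
  have h := hB _ ⟨i, i.isLt, rfl⟩
  rw [hα, Matrix.mulVec_sub, hw, hw, hi, one_smul] at h
  have hne : (σ i : ℕ) ≠ σ j := by
    intro hc
    have := σ.injective (Fin.ext hc)
    subst this
    omega
  rcases hε j with hj | hj
  · rw [hj, one_smul] at h
    refine ⟨hj, ?_⟩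
    rcases h with h | h
    · exact Or.inl (eq_succ_of_evec_sub_mem_DeltaR (σ i).isLt (σ j).isLt hne h)
    · exact Or.inr (lt_of_neg_evec_sub_mem_PhiPlus (σ i).isLt (σ j).isLt hne h)
  · rw [hj, neg_one_smul, sub_neg_eq_add] at h
    rcases h with h | h
    · exact absurd h (evec_add_not_mem_DeltaR (σ i).isLt (σ j).isLt)
    · exact absurd h (neg_evec_add_not_mem_PhiPlus (σ i).isLt (σ j).isLt)

/-- The Bessel condition at the short simple root. -/
lemma last_of_pos
    (hw : ∀ i : Fin (l-1), w.mulVec (evec l (i : ℕ)) = ε i • evec l ((σ i : Fin (l-1)) : ℕ))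
    (hB : ∀ a ∈ DeltaR l, w.mulVec a ∈ DeltaR l ∨ (-(w.mulVec a)) ∈ PhiPlus l)
    {i : Fin (l-1)} (hi : (i : ℕ) = l - 2) (h1 : ε i = 1) : σ i = i := by
  have h := hB _ ⟨i, i.isLt, rfl⟩
  rw [alphaR, if_pos hi, hw, h1, one_smul] at h
  rcases h with h | h
  · exact Fin.ext ((eq_of_evec_mem_DeltaR (σ i).isLt h).trans hi.symm)
  · exact absurd h (neg_evec_not_mem_PhiPlus (σ i).isLt)

/-- If `ε_i = 1`, then `w` fixes `e_j` for every `j ≥ i`. The induction is on the distance `k` from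
`i` to the last index. -/
lemma fixed_above (hε : ∀ i, ε i = 1 ∨ ε i = -1)
    (hw : ∀ i : Fin (l-1), w.mulVec (evec l (i : ℕ)) = ε i • evec l ((σ i : Fin (l-1)) : ℕ))
    (hB : ∀ a ∈ DeltaR l, w.mulVec a ∈ DeltaR l ∨ (-(w.mulVec a)) ∈ PhiPlus l)
    (k : ℕ) (i : Fin (l-1)) (hk : (i : ℕ) + k = l - 2) (hi : ε i = 1) :
    ∀ j, i ≤ j → ε j = 1 ∧ σ j = j := by
  induction k generalizing i with
  | zero =>
    intro j hij
    have hji : j = i := by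
      have := j.isLt
      rw [Fin.le_def] at hij
      exact Fin.ext (by omega)
    subst hji
    exact ⟨hi, last_of_pos hw hB (by omega) hi⟩
  | succ k ih =>
    have hlt : (i : ℕ) + 1 < l - 1 := by omega
    obtain ⟨hs, hstep⟩ := step_of_pos hε hw hB (j := ⟨i + 1, hlt⟩) rfl hi
    have above := ih ⟨i + 1, hlt⟩ (by simp only; omega) hs
    have hfix := (above _ le_rfl).2
    intro j hij
    rcases hij.eq_or_lt with rfl | hij
    · refine ⟨hi, ?_⟩
      rw [hfix] at hstep
      rcases hstep with h | h
      · exact Fin.ext (by simp only at h; omega)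
      · -- `σ i` lies above `i + 1`, so it is itself a fixed point of `σ`.
        exact σ.injective (above _ h.le).2
    · exact above j hij

lemma exists_threshold (hε : ∀ i, ε i = 1 ∨ ε i = -1)
    (hw : ∀ i : Fin (l-1), w.mulVec (evec l (i : ℕ)) = ε i • evec l ((σ i : Fin (l-1)) : ℕ))
    (hB : ∀ a ∈ DeltaR l, w.mulVec a ∈ DeltaR l ∨ (-(w.mulVec a)) ∈ PhiPlus l) :
    ∃ n ≤ l - 1, (∀ j : Fin (l-1), (j : ℕ) < n → ε j = -1) ∧
      ∀ j : Fin (l-1), n ≤ j → ε j = 1 ∧ σ j = j := by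
  classical
  have hex : ∃ n : ℕ, ∀ j : Fin (l-1), n ≤ j → ε j = 1 ∧ σ j = j :=
    ⟨l - 1, fun j hj => absurd j.isLt (by omega)⟩
  refine ⟨Nat.find hex, Nat.find_min' hex fun j hj => absurd j.isLt (by omega), ?_,
    Nat.find_spec hex⟩
  intro j hj
  refine (hε j).resolve_left fun h1 => Nat.find_min hex hj fun i hi => ?_
  have := j.isLt
  exact fixed_above hε hw hB (l - 2 - j) j (by omega) h1 i hi

end Bessel

lemma pmatR_mul_wtmatR_apply {l n : ℕ} (hn : n ≤ l - 1) (τ : Equiv.Perm (Fin n))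
    (r j : Fin (l-1)) : (pmatR l n τ * wtmatR l n) r j =
      if h : (j : ℕ) < n then (if (r : ℕ) = τ (Fin.rev ⟨j, h⟩) then -1 else 0)
      else if r = j then 1 else 0 := by
  rw [Matrix.mul_apply]
  by_cases h : (j : ℕ) < n
  · rw [dif_pos h, Finset.sum_eq_single (⟨n - 1 - j, by omega⟩ : Fin (l-1))]
    · have hk : n - 1 - (j : ℕ) < n := by omega
      have hrev : Fin.rev ⟨(j : ℕ), h⟩ = ⟨n - 1 - j, hk⟩ := Fin.ext (by simp [Fin.val_rev]; omega)
      have hjj : (j : ℕ) = n - 1 - (n - 1 - j) := by omega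
      simp only [pmatR, wtmatR, Matrix.of_apply, hk, hrev, dif_pos, if_pos, ← hjj]
      split_ifs <;> simp
    · intro b _ hb
      have hb' : (b : ℕ) ≠ n - 1 - j := fun hc => hb (Fin.ext hc)
      have hw0 : wtmatR l n b j = 0 := by
        simp only [wtmatR, Matrix.of_apply]
        split_ifs with h1 h2 h3
        · omega
        · rfl
        · subst h3
          omega
        · rfl
      rw [hw0, mul_zero]
    · simp
  · rw [dif_neg h, Finset.sum_eq_single j]
    · simp [pmatR, wtmatR, h]
    · intro b _ hb
      have hw0 : wtmatR l n b j = 0 := by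
        simp only [wtmatR, Matrix.of_apply, hb, if_false]
        split_ifs <;> first | rfl | omega
      rw [hw0, mul_zero]
    · simp

/-- The sum of the coordinates of `w e_j`, which recovers `n` from `w ∈ B_n(W)`. -/
lemma colSum_of_mem_BnSupp {l n : ℕ} (hn : n ≤ l - 1) {w : Matrix (Fin (l-1)) (Fin (l-1)) ℝ}
    (hw : w ∈ BnSupp l n) (j : Fin (l-1)) : ∑ r, w r j = if (j : ℕ) < n then -1 else 1 := by
  obtain ⟨-, hw⟩ := hw
  split_ifs at hw with h0
  · subst hw h0
    simp [Matrix.one_apply]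
  · obtain ⟨τ, rfl⟩ := hw
    simp only [pmatR_mul_wtmatR_apply hn]
    split_ifs with h
    · rw [Finset.sum_eq_single ⟨τ (Fin.rev ⟨j, h⟩), by omega⟩]
      · simp
      · intro b _ hb
        exact if_neg fun hc => hb (Fin.ext hc)
      · simp
    · simp

/-- Corollary 4.6: the sets `B_0(W), …, B_{l-1}(W)` partition the Bessel
support: every `w ∈ B(W)` lies in exactly one `B_n(W)` with `0 ≤ n ≤ l−1`. -/
theorem statement14 (l : ℕ) (hl : 2 ≤ l) :
    ∀ w ∈ BesselSupp l, ∃! n : ℕ, n ≤ l - 1 ∧ w ∈ BnSupp l n := by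
  intro w hwB
  obtain ⟨⟨σ, ε, hε, hw⟩, hB⟩ := id hwB
  obtain ⟨n, hn, hneg, hpos⟩ := exists_threshold hε hw hB
  refine ⟨n, ⟨hn, hwB, ?_⟩, ?_⟩
  · split_ifs with h0
    · subst h0
      ext r j
      obtain ⟨h1, h2⟩ := hpos j (Nat.zero_le _)
      simp [apply_of_signed hw, h1, h2, Matrix.one_apply, Fin.ext_iff]
    · -- `σ` fixes every index `≥ n`, hence preserves `{0, …, n-1}`.
      have hlt : ∀ j : Fin (l-1), (j : ℕ) < n → (σ j : ℕ) < n := by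
        intro j hj
        by_contra hc
        have := σ.injective (hpos (σ j) (by omega)).2
        rw [this] at hc
        exact hc hj
      let f : Fin n → Fin n := fun i =>
        ⟨σ ⟨Fin.rev i, by omega⟩, hlt ⟨Fin.rev i, by omega⟩ (Fin.rev i).isLt⟩
      have hf : Function.Injective f := by
        intro a b hab
        have h1 := σ.injective (Fin.ext (Fin.mk.inj hab))
        exact Fin.rev_injective (Fin.ext (Fin.mk.inj h1))
      refine ⟨Equiv.ofBijective f (Finite.injective_iff_bijective.mp hf), ?_⟩
      ext r j
      rw [pmatR_mul_wtmatR_apply hn, apply_of_signed hw]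
      by_cases h : (j : ℕ) < n
      · have hrr : f (Fin.rev ⟨j, h⟩) = ⟨σ j, hlt j h⟩ := by simp only [f, Fin.rev_rev]
        rw [dif_pos h, Equiv.ofBijective_apply, hrr, hneg j h]
      · obtain ⟨h1, h2⟩ := hpos j (by omega)
        simp [h, h1, h2, Fin.ext_iff]
  · rintro m ⟨hm, hwm⟩
    have hcol : ∀ j : Fin (l-1), ∑ r, w r j = if (j : ℕ) < n then -1 else 1 := by
      intro j
      rw [Finset.sum_eq_single (σ j)]
      · rw [apply_of_signed hw, if_pos rfl]
        split_ifs with h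
        · exact hneg j h
        · exact (hpos j (by omega)).1
      · intro b _ hb
        rw [apply_of_signed hw, if_neg fun hc => hb (Fin.ext hc)]
      · simp
    have hcolm := colSum_of_mem_BnSupp hm hwm
    -- For `m ≠ n`, the two formulas give column `min m n` different sums.
    rcases lt_trichotomy m n with h | h | h
    · have h1 := hcol ⟨m, by omega⟩
      rw [hcolm, if_neg (lt_irrefl m), if_pos h] at h1
      norm_num at h1
    · exact h
    · have h1 := hcol ⟨n, by omega⟩
      rw [hcolm, if_pos h, if_neg (lt_irrefl n)] at h1
      norm_num at h1
end
end

section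
/- (Lemma 6.2) Fix k with 1 ≤ k ≤ l−1 and m ≥ 1. If u₀ ∈ N_k with u₀ ∉ U_m, and u⁺ ∈ S_k⁺ ∩ U_m, then (u⁺)^{-1}·u₀·u⁺ ∈ N_k and (u⁺)^{-1}·u₀·u⁺ ∉ U_m. -/
/-!
Conjugation by `u⁺` preserves both `N_k` and `H_m`.

* `u⁺` and its inverse are block upper triangular for the block sizes `(k, 2(l-k), k)`, so
  `(u⁺)⁻¹ (u₀ - 1) u⁺` is strictly block upper triangular whenever `u₀ - 1` is
  (`NkMem.conj`).
* `K_m`, hence `H_m`, is closed under products and inverses. For inverses, a matrix of determinant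
  one with entries in `ℤ_p` has its inverse equal to its adjugate, which again has entries in
  `ℤ_p`; then `g⁻¹ - 1 = -g⁻¹ (g - 1)` has entries of norm at most `p ^ (-m)` because the norm is
  ultrametric.

If `v = (u⁺)⁻¹ u₀ u⁺` were in `U_m`, then `u₀ = u⁺ v (u⁺)⁻¹` would lie in `H_m`. As
`N_k ⊆ U_{SO_{2l}}`, this would give `u₀ ∈ U_m`.
-/


open Matrix BigOperators

noncomputable section

/-- Entry of a square matrix read with 0-indexed natural-number indices (`0` out of range). -/
def ent {F : Type*} [Field F] {N : ℕ} (g : Matrix (Fin N) (Fin N) F) (i j : ℕ) : F :=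
  if h : i < N ∧ j < N then g ⟨i, h.1⟩ ⟨j, h.2⟩ else 0

/-- The antidiagonal matrix `J_n` (entry `(i,j)` is `1` iff `i+j = n+1` in 1-indexed terms). -/
def Jmat (F : Type*) [Field F] (n : ℕ) : Matrix (Fin n) (Fin n) F :=
  Matrix.of fun i j => if (i : ℕ) + (j : ℕ) + 1 = n then 1 else 0

/-- `J_{2l,ρ} = diag(I_{l-1}, [[0,1],[-ρ,0]], I_{l-1}) · J_{2l}`. -/
def Jrho (F : Type*) [Field F] (l : ℕ) (ρ : F) : Matrix (Fin (2*l)) (Fin (2*l)) F :=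
  (Matrix.of fun i j : Fin (2*l) =>
    if (i : ℕ) = l - 1 ∧ (j : ℕ) = l then 1
    else if (i : ℕ) = l ∧ (j : ℕ) = l - 1 then -ρ
    else if i = j ∧ ((i : ℕ) < l - 1 ∨ l + 1 ≤ (i : ℕ)) then 1
    else 0) * Jmat F (2*l)

/-- Membership in the quasi-split even special orthogonal group `SO_{2l}(J_{2l,ρ})`. -/
def SO2l {F : Type*} [Field F] (l : ℕ) (ρ : F) (g : Matrix (Fin (2*l)) (Fin (2*l)) F) : Prop :=
  g.det = 1 ∧ gᵀ * Jrho F l ρ * g = Jrho F l ρ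

/-- Membership in `U_{SO_{2l}}`: upper triangular, all diagonal entries `1`, and in `SO_{2l}`. -/
def USO2l {F : Type*} [Field F] (l : ℕ) (ρ : F) (g : Matrix (Fin (2*l)) (Fin (2*l)) F) : Prop :=
  SO2l l ρ g ∧ (∀ i j : Fin (2*l), (j : ℕ) < (i : ℕ) → g i j = 0) ∧ ∀ i, g i i = 1

/-- Exponent of the diagonal entry of
`e_m = diag(p^{-2m(l-1)}, …, p^{-2m}, 1, 1, p^{2m}, …, p^{2m(l-1)})`. -/
def expo (l m i : ℕ) : ℤ :=
  if i < l - 1 then -((2 * m * (l - 1 - i) : ℕ) : ℤ)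
  else if l + 1 ≤ i then ((2 * m * (i - l) : ℕ) : ℤ)
  else 0

/-- The diagonal matrix `e_m`. -/
def emat (p l m : ℕ) [Fact p.Prime] : Matrix (Fin (2*l)) (Fin (2*l)) ℚ_[p] :=
  Matrix.diagonal fun i => (p : ℚ_[p]) ^ (expo l m (i : ℕ))

/-- The diagonal matrix `e_m⁻¹`. -/
def ematInv (p l m : ℕ) [Fact p.Prime] : Matrix (Fin (2*l)) (Fin (2*l)) ℚ_[p] :=
  Matrix.diagonal fun i => (p : ℚ_[p]) ^ (-(expo l m (i : ℕ)))

/-- Membership in `K_m = (I_{2l} + p^m·M_{2l}(ℤ_p)) ∩ SO_{2l}(J_{2l,ρ})`. -/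
def Km (p l m : ℕ) [Fact p.Prime] (ρ : ℚ_[p])
    (g : Matrix (Fin (2*l)) (Fin (2*l)) ℚ_[p]) : Prop :=
  SO2l l ρ g ∧
    ∀ i j : Fin (2*l), ‖g i j - (if i = j then 1 else 0)‖ ≤ (p : ℝ) ^ (-(m : ℤ))

/-- Membership in `H_m = e_m·K_m·e_m⁻¹`. -/
def Hm (p l m : ℕ) [Fact p.Prime] (ρ : ℚ_[p])
    (h : Matrix (Fin (2*l)) (Fin (2*l)) ℚ_[p]) : Prop :=
  Km p l m ρ (ematInv p l m * h * emat p l m)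

/-- Membership in `U_m = U_{SO_{2l}} ∩ H_m`. -/
def Um (p l m : ℕ) [Fact p.Prime] (ρ : ℚ_[p])
    (u : Matrix (Fin (2*l)) (Fin (2*l)) ℚ_[p]) : Prop :=
  USO2l l ρ u ∧ Hm p l m ρ u

/-- The block index (0, 1 or 2) of a row/column index for the block sizes `(k, 2(l−k), k)`. -/
def blockOf (l k i : ℕ) : ℕ := if i < k then 0 else if i < 2*l - k then 1 else 2

/-- `N_k`: elements `g ∈ SO_{2l}(J_{2l,ρ})` with `g − I_{2l}` strictly block upper triangular
with respect to the block sizes `(k, 2(l−k), k)` (the unipotent radical of `P_k`). -/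
def NkMem (l k : ℕ) {p : ℕ} [Fact p.Prime] (ρ : ℚ_[p])
    (g : Matrix (Fin (2*l)) (Fin (2*l)) ℚ_[p]) : Prop :=
  SO2l l ρ g ∧ ∀ i j : Fin (2*l), ¬ blockOf l k (i : ℕ) < blockOf l k (j : ℕ) →
    g i j = (if i = j then 1 else 0)

/-- `S_k⁺`: block-diagonal (for block sizes `(k, 2(l−k), k)`) unipotent upper triangular
elements of `SO_{2l}(J_{2l,ρ})`; for such an element `diag(u₁,u₂,u₃) ∈ SO_{2l}` one
automatically has `u₃ = J_k·ᵀu₁⁻¹·J_k`. -/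
def SkPlusMem (l k : ℕ) {p : ℕ} [Fact p.Prime] (ρ : ℚ_[p])
    (g : Matrix (Fin (2*l)) (Fin (2*l)) ℚ_[p]) : Prop :=
  SO2l l ρ g ∧ (∀ i j : Fin (2*l), (j : ℕ) < (i : ℕ) → g i j = 0) ∧ (∀ i, g i i = 1) ∧
  (∀ i j : Fin (2*l), blockOf l k (i : ℕ) ≠ blockOf l k (j : ℕ) → g i j = 0)

section OrthogonalGroup

variable {F : Type*} [Field F] {l : ℕ} {ρ : F} {g h : Matrix (Fin (2*l)) (Fin (2*l)) F}

lemma SO2l.isUnit_det (hg : SO2l l ρ g) : IsUnit g.det := by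
  rw [hg.1]; exact isUnit_one

lemma SO2l.mul (hg : SO2l l ρ g) (hh : SO2l l ρ h) : SO2l l ρ (g * h) := by
  refine ⟨by rw [det_mul, hg.1, hh.1, one_mul], ?_⟩
  calc (g * h)ᵀ * Jrho F l ρ * (g * h)
      = hᵀ * (gᵀ * Jrho F l ρ * g) * h := by simp only [transpose_mul, Matrix.mul_assoc]
    _ = Jrho F l ρ := by rw [hg.2, hh.2]

lemma SO2l.inv (hg : SO2l l ρ g) : SO2l l ρ g⁻¹ := by
  have hgi : g * g⁻¹ = 1 := mul_nonsing_inv g hg.isUnit_det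
  refine ⟨by rw [det_nonsing_inv, hg.1, Ring.inverse_one], ?_⟩
  calc g⁻¹ᵀ * Jrho F l ρ * g⁻¹
      = g⁻¹ᵀ * (gᵀ * Jrho F l ρ * g) * g⁻¹ := by rw [hg.2]
    _ = (g * g⁻¹)ᵀ * Jrho F l ρ * (g * g⁻¹) := by
        simp only [transpose_mul, Matrix.mul_assoc]
    _ = Jrho F l ρ := by rw [hgi]; simp

end OrthogonalGroup

section Norms

variable {p : ℕ} [Fact p.Prime] {n : Type*}

lemma norm_entry_le_one [DecidableEq n] {A : Matrix n n ℚ_[p]} {ε : ℝ} (hε : ε ≤ 1)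
    (hA : ∀ i j, ‖(A - 1) i j‖ ≤ ε) (i j : n) : ‖A i j‖ ≤ 1 := by
  have h1 : ‖(1 : Matrix n n ℚ_[p]) i j‖ ≤ 1 := by
    rw [Matrix.one_apply]; split_ifs <;> simp
  calc ‖A i j‖ = ‖(A - 1) i j + (1 : Matrix n n ℚ_[p]) i j‖ := by simp
    _ ≤ max ‖(A - 1) i j‖ ‖(1 : Matrix n n ℚ_[p]) i j‖ := Padic.nonarchimedean _ _
    _ ≤ 1 := max_le ((hA i j).trans hε) h1

variable [Fintype n]

/-- Entrywise norm bounds multiply under matrix multiplication, since the norm is ultrametric. -/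
lemma norm_mul_entry_le {A B : Matrix n n ℚ_[p]} {a b : ℝ} (ha : 0 ≤ a) (hb : 0 ≤ b)
    (hA : ∀ i j, ‖A i j‖ ≤ a) (hB : ∀ i j, ‖B i j‖ ≤ b) (i j : n) :
    ‖(A * B) i j‖ ≤ a * b := by
  rw [Matrix.mul_apply]
  refine IsUltrametricDist.norm_sum_le_of_forall_le_of_nonneg (mul_nonneg ha hb) fun c _ => ?_
  rw [norm_mul]
  exact mul_le_mul (hA i c) (hB c j) (norm_nonneg _) ha

variable [DecidableEq n]

/-- The inverse of an integral matrix of determinant one is its adjugate, hence integral. -/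
lemma norm_inv_entry_le_one {A : Matrix n n ℚ_[p]} (hdet : A.det = 1)
    (hA : ∀ i j, ‖A i j‖ ≤ 1) (i j : n) : ‖A⁻¹ i j‖ ≤ 1 := by
  let B : Matrix n n ℤ_[p] := Matrix.of fun i j => ⟨A i j, hA i j⟩
  have hB : PadicInt.Coe.ringHom.mapMatrix B = A := by ext i j; rfl
  have hinv : A⁻¹ = PadicInt.Coe.ringHom.mapMatrix B.adjugate := by
    rw [Matrix.inv_def, hdet, Ring.inverse_one, one_smul, RingHom.map_adjugate, hB]
  rw [hinv]
  exact (B.adjugate i j).norm_le_one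

lemma norm_mul_sub_one_le {A B : Matrix n n ℚ_[p]} {ε : ℝ} (h0 : 0 ≤ ε) (hε : ε ≤ 1)
    (hA : ∀ i j, ‖(A - 1) i j‖ ≤ ε) (hB : ∀ i j, ‖(B - 1) i j‖ ≤ ε) (i j : n) :
    ‖(A * B - 1) i j‖ ≤ ε := by
  have hdecomp : A * B - 1 = A * (B - 1) + (A - 1) := by noncomm_ring
  rw [hdecomp, Matrix.add_apply]
  refine (Padic.nonarchimedean _ _).trans (max_le ?_ (hA i j))
  simpa using norm_mul_entry_le zero_le_one h0 (norm_entry_le_one hε hA) hB i j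

lemma norm_inv_sub_one_le {A : Matrix n n ℚ_[p]} {ε : ℝ} (h0 : 0 ≤ ε) (hε : ε ≤ 1)
    (hdet : A.det = 1) (hA : ∀ i j, ‖(A - 1) i j‖ ≤ ε) (i j : n) :
    ‖(A⁻¹ - 1) i j‖ ≤ ε := by
  have hmul : A⁻¹ * A = 1 := nonsing_inv_mul A (by rw [hdet]; exact isUnit_one)
  have hdecomp : A⁻¹ - 1 = -(A⁻¹ * (A - 1)) := by rw [Matrix.mul_sub, hmul]; simp
  rw [hdecomp, Matrix.neg_apply, norm_neg]
  simpa using norm_mul_entry_le zero_le_one h0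
    (norm_inv_entry_le_one hdet (norm_entry_le_one hε hA)) hA i j

end Norms

section Congruence

variable {p l m k : ℕ} [Fact p.Prime] {ρ : ℚ_[p]}
  {g h : Matrix (Fin (2*l)) (Fin (2*l)) ℚ_[p]}

lemma Km_iff : Km p l m ρ g ↔
    SO2l l ρ g ∧ ∀ i j, ‖(g - 1) i j‖ ≤ (p : ℝ) ^ (-(m : ℤ)) := by
  simp only [Km, Matrix.sub_apply, Matrix.one_apply]

lemma radius_nonneg (p m : ℕ) : (0 : ℝ) ≤ (p : ℝ) ^ (-(m : ℤ)) := by positivity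

lemma radius_le_one (p m : ℕ) [Fact p.Prime] : (p : ℝ) ^ (-(m : ℤ)) ≤ 1 :=
  zpow_le_one_of_nonpos₀ (by exact_mod_cast (Fact.out : p.Prime).one_le) (by omega)

lemma Km.mul (hg : Km p l m ρ g) (hh : Km p l m ρ h) : Km p l m ρ (g * h) := by
  rw [Km_iff] at *
  exact ⟨hg.1.mul hh.1, norm_mul_sub_one_le (radius_nonneg p m) (radius_le_one p m) hg.2 hh.2⟩

lemma Km.inv (hg : Km p l m ρ g) : Km p l m ρ g⁻¹ := by
  rw [Km_iff] at *
  exact ⟨hg.1.inv, norm_inv_sub_one_le (radius_nonneg p m) (radius_le_one p m) hg.1.1 hg.2⟩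

lemma emat_mul_ematInv : emat p l m * ematInv p l m = 1 := by
  have hp0 : (p : ℚ_[p]) ≠ 0 := by exact_mod_cast (Fact.out : p.Prime).ne_zero
  rw [emat, ematInv, Matrix.diagonal_mul_diagonal, ← Matrix.diagonal_one]
  congr 1
  funext i
  rw [← zpow_add₀ hp0]
  simp

lemma inv_emat : (emat p l m)⁻¹ = ematInv p l m := Matrix.inv_eq_right_inv emat_mul_ematInv

lemma inv_ematInv : (ematInv p l m)⁻¹ = emat p l m := Matrix.inv_eq_left_inv emat_mul_ematInv

lemma Hm.mul (hg : Hm p l m ρ g) (hh : Hm p l m ρ h) : Hm p l m ρ (g * h) := by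
  have hmul := Km.mul hg hh
  have heq : (ematInv p l m * g * emat p l m) * (ematInv p l m * h * emat p l m)
      = ematInv p l m * (g * h) * emat p l m := by
    calc _ = ematInv p l m * g * (emat p l m * ematInv p l m) * h * emat p l m := by
          simp only [Matrix.mul_assoc]
      _ = _ := by rw [emat_mul_ematInv]; simp only [Matrix.mul_assoc, Matrix.one_mul]
  rwa [heq] at hmul

lemma Hm.inv (hg : Hm p l m ρ g) : Hm p l m ρ g⁻¹ := by
  have hinv := Km.inv hg
  rwa [Matrix.mul_inv_rev, Matrix.mul_inv_rev, inv_emat, inv_ematInv, ← Matrix.mul_assoc] at hinv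

lemma lt_of_blockOf_lt {i j : ℕ} (hij : blockOf l k i < blockOf l k j) : i < j := by
  unfold blockOf at hij
  split_ifs at hij <;> omega

/-- `N_k ⊆ U_{SO_{2l}}`. -/
lemma NkMem.uso2l (hg : NkMem l k ρ g) : USO2l l ρ g := by
  refine ⟨hg.1, fun i j hji => ?_, fun i => ?_⟩
  · rw [hg.2 i j fun hlt => absurd (lt_of_blockOf_lt hlt) (by omega),
      if_neg fun hij => by simp [hij] at hji]
  · rw [hg.2 i i (lt_irrefl _), if_pos rfl]

/-- The elements of `S_k⁺` normalise `N_k`. -/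
lemma NkMem.conj (hg : NkMem l k ρ g) (hh : SkPlusMem l k ρ h) :
    NkMem l k ρ (h⁻¹ * g * h) := by
  refine ⟨(hh.1.inv.mul hg.1).mul hh.1, fun i j hij => ?_⟩
  have hhi : h⁻¹ * h = 1 := nonsing_inv_mul h hh.1.isUnit_det
  have htri : BlockTriangular h fun i : Fin (2*l) => blockOf l k i :=
    fun i j hlt => hh.2.2.2 i j (ne_of_gt hlt)
  have htri' : BlockTriangular h⁻¹ fun i : Fin (2*l) => blockOf l k i := by
    have := Matrix.invertibleOfIsUnitDet h hh.1.isUnit_det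
    exact blockTriangular_inv_of_blockTriangular htri
  have hzero : (h⁻¹ * (g - 1) * h) i j = 0 := by
    rw [Matrix.mul_apply]
    refine Finset.sum_eq_zero fun c _ => ?_
    by_cases hcj : blockOf l k j < blockOf l k c
    · rw [htri hcj, mul_zero]
    rw [Matrix.mul_apply, Finset.sum_eq_zero, zero_mul]
    intro a _
    by_cases hia : blockOf l k a < blockOf l k i
    · rw [htri' hia, zero_mul]
    · rw [Matrix.sub_apply, hg.2 a c (by omega), Matrix.one_apply, sub_self, mul_zero]
  have hdecomp : h⁻¹ * g * h = h⁻¹ * (g - 1) * h + 1 := by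
    rw [Matrix.mul_sub, Matrix.sub_mul, Matrix.mul_one, hhi, sub_add_cancel]
  rw [hdecomp, Matrix.add_apply, hzero, zero_add, Matrix.one_apply]

end Congruence

/-- Lemma 6.2: if `u₀ ∈ N_k \ U_m` and `u⁺ ∈ S_k⁺ ∩ U_m` then
`(u⁺)⁻¹·u₀·u⁺ ∈ N_k \ U_m`. -/
theorem statement16 (p : ℕ) [Fact p.Prime] (hp : p ≠ 2) (l : ℕ) (hl : 2 ≤ l)
    (ρ : ℚ_[p]) (hρ1 : ‖ρ‖ = 1) (hρ : ∀ x : ℚ_[p], x * x ≠ ρ)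
    (k : ℕ) (hk1 : 1 ≤ k) (hk2 : k ≤ l - 1) (m : ℕ) (hm : 1 ≤ m) :
    ∀ u₀ uplus : Matrix (Fin (2*l)) (Fin (2*l)) ℚ_[p],
      NkMem l k ρ u₀ → ¬ Um p l m ρ u₀ →
      SkPlusMem l k ρ uplus → Um p l m ρ uplus →
      NkMem l k ρ (uplus⁻¹ * u₀ * uplus) ∧ ¬ Um p l m ρ (uplus⁻¹ * u₀ * uplus) := by
  intro u₀ uplus hu₀ hu₀m hup hupm
  refine ⟨hu₀.conj hup, fun hv => hu₀m ⟨hu₀.uso2l, ?_⟩⟩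
  have hui : uplus * uplus⁻¹ = 1 := mul_nonsing_inv uplus hup.1.isUnit_det
  have heq : uplus * (uplus⁻¹ * u₀ * uplus) * uplus⁻¹ = u₀ := by
    calc _ = (uplus * uplus⁻¹) * u₀ * (uplus * uplus⁻¹) := by simp only [Matrix.mul_assoc]
      _ = u₀ := by rw [hui, Matrix.one_mul, Matrix.mul_one]
  rw [← heq]
  exact (hupm.2.mul hv.2).mul hupm.2.inv
end
end
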